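/- Let H be a finite-dimensional semisimple Hopf algebra over k, A a noetherian left H-module algebra, B = A#H the smash product, and t ∈ H a nonzero integral with ε(t) = 1. Define a right B-module M to be t-torsion if m(A#t) is finite dimensional for every m ∈ M. Then the class T of t-torsion right B-modules is closed under submodules, quotients, extensions, and arbitrary direct sums (i.e., it is a localizing Serre subcategory of Mod B). -/

import Mathlib

open TensorProduct MulOpposite

/-- For a left `H`-module algebra `A`, the action on a fixed element `a ∈ A` as a
`k`-linear map `H →ₗ[k] A`, `h ↦ h • a`. -/
def actL (k H A : Type) [Field k] [Ring H] [Algebra k H] [Ring A] [Algebra k A]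
    [Module H A] [IsScalarTower k H A] (a : A) : H →ₗ[k] A where
  toFun h := h • a
  map_add' h h' := add_smul h h' a
  map_smul' c h := smul_assoc c h a

/-- A right `B`-module `M` is `t`-torsion when `m·(A#t)` is finite-dimensional for every
`m ∈ M`; here the smash product `B = A#H` is presented by a linear isomorphism
`ψ : A ⊗[k] H ≃ B`, and `a#t = ψ (a ⊗ t)`. -/
def IsTTorsion (k H A B : Type) [Field k] [Ring H] [Algebra k H] [Ring A] [Algebra k A]
    [Module H A] [IsScalarTower k H A] [Ring B] [Algebra k B]
    (ψ : (A ⊗[k] H) ≃ₗ[k] B) (t : H)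
    (M : Type) [AddCommGroup M] [Module Bᵐᵒᵖ M] [Module k M] [IsScalarTower k Bᵐᵒᵖ M] :
    Prop :=
  ∀ m : M, FiniteDimensional k
    (Submodule.span k {x | ∃ a : A, x = op (ψ (a ⊗ₜ[k] t)) • m})

/-!
Write `e = 1#t`. Because `t` is an integral, every `b * e` is of the form `a#t`, so that `A#t = Be`
and a right `B`-module is `t`-torsion exactly when `Ne` is finite-dimensional for every finitely
generated submodule `N`. As `e` is idempotent, `N ↦ Ne` is exact; the only obstacle to closure
under extensions is that a submodule of a finitely generated module be finitely generated, that is,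
that `B` be right noetherian.

The ring `End_A(B)` of endomorphisms of the free left `A`-module `B` is a matrix ring over the left
noetherian ring `Aᵒᵖ`, hence left noetherian, and contains `Bᵒᵖ` as the right multiplications.
Averaging an endomorphism `T` to `∑ S(t₁) T t₂`, as in Maschke's theorem, makes it commute with all
left multiplications, that is, makes it a right multiplication. So `Bᵒᵖ` is a retract of `End_A(B)`
as a right module over itself; as the retraction sends the extension of a left ideal `I` of `Bᵒᵖ`
back into `I`, noetherianity descends. The averaging uses `t` as a right integral, which it is by
semisimplicity: for `ε(z) = 0` the element `x = tz` satisfies `xHx = 0`.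
-/

open Coalgebra HopfAlgebra WithConv

section NoetherianRings

theorem isNoetherianRing_moduleEnd (A V : Type*) [Ring A] [IsNoetherianRing Aᵐᵒᵖ]
    [AddCommGroup V] [Module A V] [Module.Free A V] [Module.Finite A V] :
    IsNoetherianRing (Module.End A V) := by
  classical
  let basis := Module.Free.chooseBasis A V
  let toMatrix := (basis.equivFun.conjRingEquiv.trans (endVecRingEquivMatrixEnd _ A A)).trans
    (RingEquiv.moduleEndSelf A).symm.mapMatrix
  exact isNoetherianRing_of_ringEquiv _ toMatrix.symm

theorem isNoetherianRing_of_retraction {S E : Type*} [Ring S] [Ring E] [IsNoetherianRing E]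
    (ι : S →+* E) (P : E →+ S) (hP_mul : ∀ x s, P (x * ι s) = P x * s) (hP_one : P 1 = 1) :
    IsNoetherianRing S := by
  have map_mem (I : Ideal S) (x : E) (hx : x ∈ I.map ι) : P x ∈ I := by
    induction hx using Submodule.closure_induction with
    | zero => simp
    | add x y _ _ hx hy => rw [map_add]; exact I.add_mem hx hy
    | smul_mem x _ hs =>
      obtain ⟨s, hs, rfl⟩ := hs
      rw [smul_eq_mul, hP_mul]
      exact I.mul_mem_left _ hs
  have map_le_map_iff (I J : Ideal S) : I.map ι ≤ J.map ι ↔ I ≤ J := by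
    refine ⟨fun h s hs ↦ ?_, Ideal.map_mono⟩
    have := map_mem J _ (h (Ideal.mem_map_of_mem ι hs))
    rwa [← one_mul (ι s), hP_mul, hP_one, one_mul] at this
  rw [IsNoetherianRing, isNoetherian_iff']
  exact (OrderEmbedding.ofMapLEIff _ map_le_map_iff).strictMono.wellFoundedGT

end NoetherianRings

section Integrals

theorem eq_zero_of_forall_mul_mul_eq_zero {R : Type*} [Ring R] [IsSemisimpleRing R] {x : R}
    (hx : ∀ r, x * r * x = 0) : x = 0 := by
  obtain ⟨e, he, hspan⟩ := IsSemisimpleRing.ideal_eq_span_idempotent (Ideal.span {x})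
  obtain ⟨r, rfl⟩ : ∃ r, r * x = e :=
    Ideal.mem_span_singleton'.mp (hspan ▸ Ideal.mem_span_singleton_self e)
  obtain ⟨s, hs⟩ : ∃ s, s * (r * x) = x :=
    Ideal.mem_span_singleton'.mp (hspan ▸ Ideal.mem_span_singleton_self x)
  rw [← hs, ← he.eq, mul_assoc r, ← mul_assoc x, hx, mul_zero, mul_zero]

theorem mul_eq_smul_of_forall_mul_eq_smul {k R : Type*} [CommRing k] [Ring R] [Algebra k R]
    [IsSemisimpleRing R] (ε : R →ₐ[k] k) {t : R} (ht : ∀ r, r * t = ε r • t) (r : R) :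
    t * r = ε r • t := by
  have mul_eq_zero (z : R) (hz : ε z = 0) : t * z = 0 :=
    eq_zero_of_forall_mul_mul_eq_zero fun s ↦ by
      rw [mul_assoc t z s, mul_assoc t, ← mul_assoc _ t, ht]
      simp [hz]
  have := mul_eq_zero (r - algebraMap k R (ε r)) (by simp)
  rwa [mul_sub, sub_eq_zero, ← Algebra.commutes, ← Algebra.smul_def] at this

end Integrals

section ConvolutionConstants

variable {k C E : Type*} [CommRing k] [AddCommGroup C] [Module k C] [Coalgebra k C] [Ring E]
  [Algebra k E]

variable (k C) in
/-- The element `T` of `E` as the constant `c ↦ ε(c) T` of the convolution algebra. -/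
noncomputable def convConst (T : E) : WithConv (C →ₗ[k] E) :=
  toConv (LinearMap.toSpanSingleton k E T ∘ₗ counit)

@[simp]
theorem convConst_apply (T : E) (c : C) : convConst k C T c = counit (R := k) c • T := rfl

@[simp]
theorem convConst_one : convConst k C (1 : E) = 1 := by
  ext c
  simp [Algebra.algebraMap_eq_smul_one]

theorem convConst_add (T U : E) : convConst k C (T + U) = convConst k C T + convConst k C U := by
  ext c
  simp

theorem convConst_mul_apply (T : E) (F : WithConv (C →ₗ[k] E)) (c : C) :
    (convConst k C T * F) c = T * F c := by
  nth_rw 2 [← one_mul F]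
  rw [(ℛ k c).convMul_apply, (ℛ k c).convMul_apply]
  simp [Finset.mul_sum, Algebra.algebraMap_eq_smul_one]

theorem mul_convConst_apply (F : WithConv (C →ₗ[k] E)) (T : E) (c : C) :
    (F * convConst k C T) c = F c * T := by
  nth_rw 2 [← mul_one F]
  rw [(ℛ k c).convMul_apply, (ℛ k c).convMul_apply]
  simp [Finset.sum_mul, Algebra.algebraMap_eq_smul_one]

theorem convConst_mul (T U : E) : convConst k C (T * U) = convConst k C T * convConst k C U := by
  ext c
  rw [convConst_mul_apply, convConst_apply, convConst_apply, mul_smul_comm]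

theorem commute_convConst {T : E} {F : WithConv (C →ₗ[k] E)} (h : ∀ c, Commute T (F c)) :
    Commute (convConst k C T) F := by
  ext c
  exact (convConst_mul_apply T F c).trans ((h c).eq.trans (mul_convConst_apply F T c).symm)

end ConvolutionConstants

section AdjointAction

variable {k H E : Type*} [CommRing k] [Ring H] [HopfAlgebra k H] [Ring E] [Algebra k E]

/-- An algebra homomorphism out of a Hopf algebra as a unit of the convolution algebra, with
inverse its composite with the antipode. -/
noncomputable def convUnit (j : H →ₐ[k] E) : (WithConv (H →ₗ[k] E))ˣ where
  val := toConv j.toLinearMap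
  inv := toConv (j.toLinearMap ∘ₗ antipode k)
  val_inv := by
    ext h
    simp [(ℛ k h).convMul_apply, ← map_mul, ← map_sum, sum_mul_antipode_eq_algebraMap_counit]
  inv_val := by
    ext h
    simp [(ℛ k h).convMul_apply, ← map_mul, ← map_sum, sum_antipode_mul_eq_algebraMap_counit]

@[simp]
theorem convUnit_apply (j : H →ₐ[k] E) (h : H) : (convUnit j : WithConv (H →ₗ[k] E)) h = j h := rfl

/-- The right adjoint action `h ↦ ∑ j(S(h₁)) T j(h₂)` of `H` on `T`, that is, the conjugate of the
constant `T` by `j` in the convolution algebra. -/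
noncomputable def rightAdjoint (j : H →ₐ[k] E) (T : E) : WithConv (H →ₗ[k] E) :=
  ↑(convUnit j)⁻¹ * convConst k H T * convUnit j

variable {j : H →ₐ[k] E}

theorem rightAdjoint_apply_eq_sum {ι : Type*} {h : H} (r : Repr k h ι) (T : E) :
    rightAdjoint j T h = ∑ i ∈ r.index, j (antipode k (r.left i)) * T * j (r.right i) := by
  rw [rightAdjoint, r.convMul_apply]
  simp only [mul_convConst_apply]
  rfl

@[simp]
theorem rightAdjoint_one : rightAdjoint j 1 = 1 := by
  simp [rightAdjoint]

theorem rightAdjoint_add (T U : E) :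
    rightAdjoint j (T + U) = rightAdjoint j T + rightAdjoint j U := by
  simp only [rightAdjoint, convConst_add, mul_add, add_mul]

theorem rightAdjoint_rightAdjoint (T : E) (g h : H) :
    rightAdjoint j (rightAdjoint j T g) h = rightAdjoint j T (g * h) := by
  simp [rightAdjoint_apply_eq_sum (ℛ k h), rightAdjoint_apply_eq_sum (ℛ k g),
    rightAdjoint_apply_eq_sum ((ℛ k g).mul (ℛ k h)), antipode_mul_antidistrib,
    Finset.sum_product_right, Finset.mul_sum, Finset.sum_mul, mul_assoc]

theorem rightAdjoint_mul_of_commute {U : E} (hU : ∀ h, Commute U (j h)) (T : E) (h : H) :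
    rightAdjoint j (T * U) h = rightAdjoint j T h * U := by
  have hcomm : Commute (convConst k H U) (convUnit j) := commute_convConst hU
  rw [← mul_convConst_apply, rightAdjoint, rightAdjoint, convConst_mul, mul_assoc, mul_assoc,
    hcomm.eq]
  simp only [mul_assoc]

theorem commute_rightAdjoint_integral {t : H} (ht : ∀ h, t * h = counit (R := k) h • t) (T : E)
    (h : H) : Commute (j h) (rightAdjoint j T t) := by
  set X := rightAdjoint j T t with hX
  have invariant : rightAdjoint j X = convConst k H X := by
    ext g
    rw [hX, rightAdjoint_rightAdjoint, ht]
    exact map_smul (rightAdjoint j T).ofConv _ _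
  have conj_eq : convConst k H X * convUnit j = convUnit j * convConst k H X := by
    rw [← Units.inv_mul_eq_iff_eq_mul, ← mul_assoc]
    exact invariant
  have := congr(($conj_eq) h)
  rw [convConst_mul_apply, mul_convConst_apply] at this
  exact this.symm

/-- In the convolution algebra `T` commutes with `j a j⁻¹`, hence `j⁻¹ T j` with `a`. -/
theorem commute_rightAdjoint {a T : E} (L : H →ₗ[k] E) (hL : ∀ h, Commute T (L h))
    (hconj : convUnit j * convConst k H a = toConv L * convUnit j) (h : H) :
    Commute a (rightAdjoint j T h) := by
  have hTL : Commute (convConst k H T) (toConv L) := commute_convConst hL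
  have hinv : convConst k H a * ↑(convUnit j)⁻¹ = ↑(convUnit j)⁻¹ * toConv L :=
    (SemiconjBy.units_inv_symm_left hconj).symm
  have key : convConst k H a * rightAdjoint j T = rightAdjoint j T * convConst k H a := by
    unfold rightAdjoint
    calc convConst k H a * (↑(convUnit j)⁻¹ * convConst k H T * convUnit j)
      _ = ↑(convUnit j)⁻¹ * (toConv L * convConst k H T) * convUnit j := by
        simp only [← mul_assoc, hinv]
      _ = ↑(convUnit j)⁻¹ * convConst k H T * (toConv L * convUnit j) := by
        simp only [← hTL.eq, mul_assoc]
      _ = ↑(convUnit j)⁻¹ * convConst k H T * convUnit j * convConst k H a := by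
        rw [← hconj, mul_assoc _ (convUnit j : WithConv (H →ₗ[k] E))]
  have := congr($key h)
  rwa [convConst_mul_apply, mul_convConst_apply] at this

end AdjointAction

section CornerFinite

open Submodule

variable {k S : Type*} [CommRing k] [Ring S] [Algebra k S]
  {M M' : Type*} [AddCommGroup M] [Module S M] [Module k M] [IsScalarTower k S M]
  [AddCommGroup M'] [Module S M'] [Module k M'] [IsScalarTower k S M']

variable (k) in
/-- The `k`-submodule `eN` of `M`, for an element `e` of `S` and an `S`-submodule `N` of `M`. -/
def cornerImage (e : S) (N : Submodule S M) : Submodule k M :=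
  (N.restrictScalars k).map (Algebra.lsmul k k M e)

theorem mem_cornerImage {e : S} {N : Submodule S M} {x : M} :
    x ∈ cornerImage k e N ↔ ∃ y ∈ N, e • y = x := Iff.rfl

theorem cornerImage_map (e : S) (f : M →ₗ[S] M') (N : Submodule S M) :
    cornerImage k e (N.map f) = (cornerImage k e N).map (f.restrictScalars k) := by
  ext x
  simp [mem_cornerImage]

theorem cornerImage_mono (e : S) {N N' : Submodule S M} (h : N ≤ N') :
    cornerImage k e N ≤ cornerImage k e N' :=
  Submodule.map_mono h

theorem cornerImage_sup (e : S) (N N' : Submodule S M) :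
    cornerImage k e (N ⊔ N') = cornerImage k e N ⊔ cornerImage k e N' := by
  rw [cornerImage, restrictScalars_sup, Submodule.map_sup, cornerImage, cornerImage]

theorem cornerImage_inf_restrictScalars {e : S} (he : IsIdempotentElem e) (N N' : Submodule S M) :
    cornerImage k e N ⊓ N'.restrictScalars k = cornerImage k e (N ⊓ N') := by
  ext x
  constructor
  · rintro ⟨⟨y, hy, rfl⟩, hx⟩
    exact ⟨e • y, ⟨N.smul_mem e hy, hx⟩, by simp [← mul_smul, he.eq]⟩
  · rintro ⟨y, ⟨hy, hy'⟩, rfl⟩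
    exact ⟨⟨y, hy, rfl⟩, N'.smul_mem e hy'⟩

variable (k) in
/-- The `S`-modules `M` such that `eN` is finitely generated over `k` for every finitely generated
submodule `N`. For `S = Bᵐᵒᵖ` and `e = 1#t` these are the `t`-torsion modules. -/
def IsCornerFinite (e : S) (M : Type*) [AddCommGroup M] [Module S M] [Module k M]
    [IsScalarTower k S M] : Prop :=
  ∀ N : Submodule S M, N.FG → (cornerImage k e N).FG

variable {e : S}

theorem isCornerFinite_iff_span_singleton :
    IsCornerFinite k e M ↔ ∀ m : M, (cornerImage k e (S ∙ m)).FG := by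
  refine ⟨fun h m ↦ h _ (fg_span_singleton m), fun h N hN ↦ ?_⟩
  induction N, hN using Submodule.fg_induction with
  | singleton m => exact h m
  | sup N N' _ _ hN hN' =>
    rw [cornerImage_sup]
    exact hN.sup hN'

theorem IsCornerFinite.of_injective (h : IsCornerFinite k e M') (f : M →ₗ[S] M')
    (hf : Function.Injective f) : IsCornerFinite k e M := by
  intro N hN
  refine fg_of_fg_map_injective (f.restrictScalars k) hf ?_
  rw [← cornerImage_map]
  exact h _ (hN.map f)

theorem IsCornerFinite.of_surjective (h : IsCornerFinite k e M) (f : M →ₗ[S] M')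
    (hf : Function.Surjective f) : IsCornerFinite k e M' := by
  rw [isCornerFinite_iff_span_singleton, hf.forall]
  intro m
  rw [← Set.image_singleton, ← map_span, cornerImage_map (k := k)]
  exact (h _ (fg_span_singleton m)).map _

/-- For finitely generated `P`, the kernel of `eP → e(M ⧸ N)` is `e(P ⊓ N)` because `e` is
idempotent, and `P ⊓ N` is again finitely generated because `S` is noetherian. -/
theorem IsCornerFinite.of_submodule_of_quotient [IsNoetherianRing S] (he : IsIdempotentElem e)
    {N : Submodule S M} (hN : IsCornerFinite k e N) (hQ : IsCornerFinite k e (M ⧸ N)) :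
    IsCornerFinite k e M := by
  intro P hP
  have : IsNoetherian S P := isNoetherian_of_fg_of_noetherian P hP
  have comap_fg : (P.comap N.subtype).FG := by
    refine fg_of_fg_map_injective N.subtype N.injective_subtype ?_
    rw [map_comap_subtype]
    exact FG.of_le_of_isNoetherian inf_le_right
  refine fg_of_fg_map_of_fg_inf_ker (N.mkQ.restrictScalars k) ?_ ?_
  · rw [← cornerImage_map]
    exact hQ _ (hP.map _)
  · rw [LinearMap.ker_restrictScalars, ker_mkQ, cornerImage_inf_restrictScalars he, inf_comm,
      ← map_comap_subtype, cornerImage_map (k := k)]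
    exact (hN _ comap_fg).map _

theorem IsCornerFinite.directSum [IsNoetherianRing k] {ι : Type*}
    {M : ι → Type*} [∀ i, AddCommGroup (M i)] [∀ i, Module S (M i)] [∀ i, Module k (M i)]
    [∀ i, IsScalarTower k S (M i)] (h : ∀ i, IsCornerFinite k e (M i)) :
    IsCornerFinite k e (DirectSum ι M) := by
  classical
  rw [isCornerFinite_iff_span_singleton]
  intro m
  induction m using DirectSum.induction_on with
  | zero => simpa [cornerImage] using fg_bot
  | of i x =>
    rw [← DirectSum.lof_eq_of S, ← Set.image_singleton, ← map_span, cornerImage_map (k := k)]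
    exact (h i _ (fg_span_singleton x)).map _
  | add x y hx hy =>
    refine (hx.sup hy).of_le ?_
    rw [← cornerImage_sup]
    exact cornerImage_mono e <| (span_singleton_le_iff_mem _ _).mpr <|
      add_mem_sup (mem_span_singleton_self x) (mem_span_singleton_self y)

end CornerFinite

section SmashProduct

variable {k H A B : Type} [Field k] [Ring A] [Algebra k A] [Ring B] [Algebra k B]

section Bialgebra

variable [Ring H] [Bialgebra k H] [Module H A] [IsScalarTower k H A]

/-- `B` is the smash product `A#H`, with `a#h = ψ (a ⊗ h)`: its unit is `1#1` and its product is
`(a#h)(b#g) = ∑ a(h₁ • b)#h₂g`. That `A` is an `H`-module algebra is encoded in `B` being an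
associative unital algebra. -/
structure IsSmashProduct (ψ : (A ⊗[k] H) ≃ₗ[k] B) : Prop where
  one_tmul_one : ψ ((1 : A) ⊗ₜ[k] (1 : H)) = 1
  tmul_mul_tmul : ∀ (a b : A) (h g : H), ψ (a ⊗ₜ[k] h) * ψ (b ⊗ₜ[k] g) =
    ψ (TensorProduct.map ((LinearMap.mulLeft k a).comp (actL k H A b)) (LinearMap.mulRight k g)
      (comul h))

namespace IsSmashProduct

variable {ψ : (A ⊗[k] H) ≃ₗ[k] B}

theorem tmul_one_mul_tmul (hψ : IsSmashProduct ψ) (a b : A) (g : H) :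
    ψ (a ⊗ₜ[k] (1 : H)) * ψ (b ⊗ₜ[k] g) = ψ ((a * b) ⊗ₜ[k] g) := by
  rw [hψ.tmul_mul_tmul, Bialgebra.comul_one, Algebra.TensorProduct.one_def, TensorProduct.map_tmul]
  simp [actL]

theorem tmul_mul_one_tmul (hψ : IsSmashProduct ψ) (a : A) (h g : H) :
    ψ (a ⊗ₜ[k] h) * ψ ((1 : A) ⊗ₜ[k] g) = ψ (a ⊗ₜ[k] (h * g)) := by
  have mul_one' := mul_one (ψ (a ⊗ₜ[k] h))
  rw [← hψ.one_tmul_one, hψ.tmul_mul_tmul, EmbeddingLike.apply_eq_iff_eq] at mul_one'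
  have := congr(LinearMap.lTensor A (LinearMap.mulRight k g) $mul_one')
  rw [LinearMap.lTensor, ← LinearMap.comp_apply, ← TensorProduct.map_comp] at this
  rw [hψ.tmul_mul_tmul]
  simpa [← LinearMap.mulRight_mul] using congr(ψ $this)

/-- The embedding `a ↦ a#1`. -/
noncomputable def inl (hψ : IsSmashProduct ψ) : A →ₐ[k] B :=
  AlgHom.ofLinearMap (ψ.toLinearMap ∘ₗ (TensorProduct.mk k A H).flip 1) hψ.one_tmul_one
    fun a b ↦ (hψ.tmul_one_mul_tmul a b 1).symm

/-- The embedding `h ↦ 1#h`. -/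
noncomputable def inr (hψ : IsSmashProduct ψ) : H →ₐ[k] B :=
  AlgHom.ofLinearMap (ψ.toLinearMap ∘ₗ TensorProduct.mk k A H 1) hψ.one_tmul_one
    fun h g ↦ (hψ.tmul_mul_one_tmul 1 h g).symm

theorem inl_apply (hψ : IsSmashProduct ψ) (a : A) : hψ.inl a = ψ (a ⊗ₜ[k] (1 : H)) := rfl

theorem inr_apply (hψ : IsSmashProduct ψ) (h : H) : hψ.inr h = ψ ((1 : A) ⊗ₜ[k] h) := rfl

theorem inl_mul_inr (hψ : IsSmashProduct ψ) (a : A) (h : H) :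
    hψ.inl a * hψ.inr h = ψ (a ⊗ₜ[k] h) := by
  rw [inl_apply, inr_apply, tmul_one_mul_tmul, mul_one]
  exact hψ

theorem inr_mul_inl (hψ : IsSmashProduct ψ) {ι : Type*} {h : H} (r : Repr k h ι) (a : A) :
    hψ.inr h * hψ.inl a = ∑ i ∈ r.index, hψ.inl (r.left i • a) * hψ.inr (r.right i) := by
  simp only [inl_mul_inr]
  refine (hψ.tmul_mul_tmul 1 a h 1).trans ?_
  simp [← r.eq, actL]

end IsSmashProduct

end Bialgebra

section HopfAlgebra

variable [Ring H] [HopfAlgebra k H] [Module H A] [IsScalarTower k H A] {ψ : (A ⊗[k] H) ≃ₗ[k] B}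

namespace IsSmashProduct

theorem commute_lmul_rightAdjoint (hψ : IsSmashProduct ψ) {t : H}
    (ht : ∀ h, t * h = counit (R := k) h • t) {T : Module.End k B}
    (hT : ∀ a, Commute T (Algebra.lmul k B (hψ.inl a))) (b : B) :
    Commute (Algebra.lmul k B b) (rightAdjoint ((Algebra.lmul k B).comp hψ.inr) T t) := by
  set j := (Algebra.lmul k B).comp hψ.inr
  set X := rightAdjoint j T t
  have commute_inl (a : A) : Commute (Algebra.lmul k B (hψ.inl a)) X := by
    refine commute_rightAdjoint ((Algebra.lmul k B).comp hψ.inl ∘ₗ actL k H A a)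
      (fun h ↦ hT (h • a)) ?_ t
    ext h : 2
    rw [mul_convConst_apply, (ℛ k h).convMul_apply]
    simpa [j, actL, -Algebra.coe_lmul_eq_mul] using
      congr(Algebra.lmul k B $(hψ.inr_mul_inl (ℛ k h) a))
  have commute_inr (h : H) : Commute (Algebra.lmul k B (hψ.inr h)) X :=
    commute_rightAdjoint_integral (j := j) ht T h
  obtain ⟨x, rfl⟩ := ψ.surjective b
  induction x with
  | zero => simp
  | add x y hx hy => simpa using hx.add_left hy
  | tmul a h =>
    rw [← hψ.inl_mul_inr, map_mul]
    exact (commute_inl a).mul_left (commute_inr h)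

/-- `B` as a left `A`-module along `a ↦ a#1`. -/
noncomputable abbrev leftModule (hψ : IsSmashProduct ψ) : Module A B :=
  Module.compHom B hψ.inl.toRingHom

theorem isNoetherianRing_moduleEnd_leftModule (hψ : IsSmashProduct ψ) [IsNoetherianRing Aᵐᵒᵖ]
    [Module.Finite k H] :
    let := hψ.leftModule
    IsNoetherianRing (Module.End A B) := by
  let := hψ.leftModule
  let ψA : A ⊗[k] H ≃ₗ[A] B :=
    { ψ with
      map_smul' a x := by
        change ψ (a • x) = hψ.inl a * ψ x
        induction x with
        | zero => simp
        | add x y hx hy => simp [smul_add, mul_add, hx, hy]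
        | tmul b h => exact (hψ.tmul_one_mul_tmul a b h).symm }
  have : Module.Free A B := .of_equiv ψA
  have : Module.Finite A B := .equiv ψA
  exact isNoetherianRing_moduleEnd A B

theorem isNoetherianRing_op (hψ : IsSmashProduct ψ) [IsNoetherianRing Aᵐᵒᵖ] [Module.Finite k H]
    {t : H} (ht : ∀ h, t * h = counit (R := k) h • t) (ht_one : counit (R := k) t = 1) :
    IsNoetherianRing Bᵐᵒᵖ := by
  let := hψ.leftModule
  have := hψ.isNoetherianRing_moduleEnd_leftModule
  have : IsScalarTower k A B := ⟨fun c a b ↦ by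
    change hψ.inl (c • a) * b = c • (hψ.inl a * b)
    rw [map_smul, smul_mul_assoc]⟩
  have : SMulCommClass Bᵐᵒᵖ A B := ⟨fun b a c ↦ mul_assoc (hψ.inl a) c b.unop⟩
  let average (T : Module.End A B) : Module.End k B :=
    rightAdjoint ((Algebra.lmul k B).comp hψ.inr) (T.restrictScalars k) t
  have average_mul_apply (T : Module.End A B) (b : B) :
      average (T * Module.toModuleEnd A B (op b)) 1 = b * average T 1 := by
    have commute_lmul : Commute (Algebra.lmul k B b) (average T) :=
      hψ.commute_lmul_rightAdjoint ht (fun a ↦ LinearMap.ext fun x ↦ T.map_smul a x) b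
    have average_mul : average (T * Module.toModuleEnd A B (op b)) =
        average T * LinearMap.mulRight k b :=
      rightAdjoint_mul_of_commute (U := LinearMap.mulRight k b)
        (fun h ↦ LinearMap.ext fun x ↦ mul_assoc (hψ.inr h) x b) (T.restrictScalars k) t
    rw [average_mul]
    simpa using congr($commute_lmul.eq 1).symm
  have average_one : average 1 = 1 := by
    change rightAdjoint ((Algebra.lmul k B).comp hψ.inr) 1 t = 1
    simp [ht_one]
  have average_add (T U : Module.End A B) : average (T + U) = average T + average U :=
    congr($(rightAdjoint_add (T.restrictScalars k) (U.restrictScalars k)) t)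
  refine isNoetherianRing_of_retraction (Module.toModuleEnd A (S := Bᵐᵒᵖ) B)
    (AddMonoidHom.mk' (fun T ↦ op (average T 1)) fun T U ↦ ?_) (fun T b ↦ ?_) ?_
  · simp [average_add]
  · exact congr(op $(average_mul_apply T b.unop))
  · simp [average_one]

end IsSmashProduct

end HopfAlgebra

section Torsion

variable [Ring H] [Bialgebra k H] [Module H A] [IsScalarTower k H A] {ψ : (A ⊗[k] H) ≃ₗ[k] B}

namespace IsSmashProduct

theorem exists_mul_inr_eq (hψ : IsSmashProduct ψ) {t : H}
    (ht : ∀ h : H, h * t = counit (R := k) h • t) (b : B) :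
    ∃ a : A, b * hψ.inr t = ψ (a ⊗ₜ[k] t) := by
  obtain ⟨x, rfl⟩ := ψ.surjective b
  induction x with
  | zero => exact ⟨0, by simp⟩
  | add x y hx hy =>
    obtain ⟨a, ha⟩ := hx
    obtain ⟨b, hb⟩ := hy
    exact ⟨a + b, by simp [add_mul, ha, hb, TensorProduct.add_tmul]⟩
  | tmul a h =>
    refine ⟨counit (R := k) h • a, ?_⟩
    rw [inr_apply, hψ.tmul_mul_one_tmul, ht, TensorProduct.smul_tmul]

theorem isTTorsion_iff_isCornerFinite (hψ : IsSmashProduct ψ) {t : H}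
    (ht : ∀ h : H, h * t = counit (R := k) h • t) (M : Type) [AddCommGroup M] [Module Bᵐᵒᵖ M]
    [Module k M] [IsScalarTower k Bᵐᵒᵖ M] :
    IsTTorsion k H A B ψ t M ↔ IsCornerFinite k (op (hψ.inr t)) M := by
  have cornerImage_eq_span (m : M) : cornerImage k (op (hψ.inr t)) (Bᵐᵒᵖ ∙ m) =
      Submodule.span k {x | ∃ a : A, x = op (ψ (a ⊗ₜ[k] t)) • m} := by
    apply le_antisymm
    · rintro x ⟨y, hy, rfl⟩
      obtain ⟨b, rfl⟩ := Submodule.mem_span_singleton.mp hy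
      obtain ⟨a, ha⟩ := hψ.exists_mul_inr_eq ht b.unop
      refine Submodule.subset_span ⟨a, ?_⟩
      rw [← ha, op_mul, mul_smul]
      rfl
    · rw [Submodule.span_le]
      rintro _ ⟨a, rfl⟩
      refine ⟨op (hψ.inl a) • m, Submodule.smul_mem _ _ (Submodule.mem_span_singleton_self m), ?_⟩
      rw [← hψ.inl_mul_inr, op_mul, mul_smul]
      rfl
  rw [isCornerFinite_iff_span_singleton, IsTTorsion]
  simp only [cornerImage_eq_span, Submodule.fg_iff_finiteDimensional]

end IsSmashProduct

end Torsion

theorem tTorsion_localizing_general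
    (k H A B : Type) [Field k]
    [Ring H] [HopfAlgebra k H] [FiniteDimensional k H] [IsSemisimpleRing H]
    [Ring A] [Algebra k A] [Module H A] [IsScalarTower k H A] [IsNoetherianRing Aᵐᵒᵖ]
    [Ring B] [Algebra k B] (ψ : (A ⊗[k] H) ≃ₗ[k] B) (hψ : IsSmashProduct ψ)
    (t : H) (htcounit : counit (R := k) t = 1) (htint : ∀ h : H, h * t = counit (R := k) h • t) :
    (∀ (M : Type) [AddCommGroup M] [Module Bᵐᵒᵖ M] [Module k M] [IsScalarTower k Bᵐᵒᵖ M]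
        (N : Submodule Bᵐᵒᵖ M),
        IsTTorsion k H A B ψ t M → IsTTorsion k H A B ψ t N) ∧
    (∀ (M : Type) [AddCommGroup M] [Module Bᵐᵒᵖ M] [Module k M] [IsScalarTower k Bᵐᵒᵖ M]
        (N : Submodule Bᵐᵒᵖ M),
        IsTTorsion k H A B ψ t M → IsTTorsion k H A B ψ t (M ⧸ N)) ∧
    (∀ (M : Type) [AddCommGroup M] [Module Bᵐᵒᵖ M] [Module k M] [IsScalarTower k Bᵐᵒᵖ M]
        (N : Submodule Bᵐᵒᵖ M),
        IsTTorsion k H A B ψ t N → IsTTorsion k H A B ψ t (M ⧸ N) →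
          IsTTorsion k H A B ψ t M) ∧
    (∀ (ι : Type) [DecidableEq ι] (Mi : ι → Type) [∀ i, AddCommGroup (Mi i)]
        [∀ i, Module Bᵐᵒᵖ (Mi i)] [∀ i, Module k (Mi i)]
        [∀ i, IsScalarTower k Bᵐᵒᵖ (Mi i)],
        (∀ i, IsTTorsion k H A B ψ t (Mi i)) →
          IsTTorsion k H A B ψ t (DirectSum ι (fun i => Mi i))) := by
  have htint' : ∀ h, t * h = counit (R := k) h • t :=
    mul_eq_smul_of_forall_mul_eq_smul (Bialgebra.counitAlgHom k H) htint
  have : IsNoetherianRing Bᵐᵒᵖ := hψ.isNoetherianRing_op htint' htcounit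
  have isIdempotentElem_inr : IsIdempotentElem (op (hψ.inr t)) := by
    rw [IsIdempotentElem, ← op_mul, ← map_mul, htint, htcounit, one_smul]
  simp only [hψ.isTTorsion_iff_isCornerFinite htint]
  refine ⟨fun M _ _ _ _ N hM ↦ ?_, fun M _ _ _ _ N hM ↦ ?_, fun M _ _ _ _ N hN hQ ↦ ?_,
    fun ι _ Mi _ _ _ _ hMi ↦ ?_⟩
  · exact hM.of_injective N.subtype N.injective_subtype
  · exact hM.of_surjective N.mkQ N.mkQ_surjective
  · exact .of_submodule_of_quotient isIdempotentElem_inr hN hQ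
  · exact .directSum hMi

end SmashProduct

/-- Let `H` be a finite-dimensional semisimple Hopf algebra over `k`, `A` a noetherian left
`H`-module algebra, `B = A#H` the smash product and `t` the idempotent integral of `H`.
Then the class of `t`-torsion right `B`-modules is closed under submodules, quotients,
extensions and arbitrary direct sums. -/
theorem tTorsion_localizing
    (k H A B : Type) [Field k] [CharZero k]
    [Ring H] [HopfAlgebra k H] [FiniteDimensional k H] [IsSemisimpleRing H]
    [Ring A] [Algebra k A] [Module H A] [IsScalarTower k H A]
    [IsNoetherianRing A] [IsNoetherianRing Aᵐᵒᵖ]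
    (hsmul_mul : ∀ (h : H) (a b : A), h • (a * b) =
      (LinearMap.mul' k A) ((TensorProduct.map (actL k H A a) (actL k H A b))
        (Coalgebra.comul h)))
    (hsmul_one : ∀ h : H, h • (1 : A) = (Coalgebra.counit (R := k) h) • (1 : A))
    [Ring B] [Algebra k B] (ψ : (A ⊗[k] H) ≃ₗ[k] B)
    (hψone : ψ ((1 : A) ⊗ₜ[k] (1 : H)) = 1)
    (hψmul : ∀ (a b : A) (h g : H), ψ (a ⊗ₜ[k] h) * ψ (b ⊗ₜ[k] g) =
      ψ ((TensorProduct.map ((LinearMap.mulLeft k a).comp (actL k H A b))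
        (LinearMap.mulRight k g)) (Coalgebra.comul h)))
    (t : H) (htcounit : Coalgebra.counit (R := k) t = 1)
    (htint : ∀ h : H, h * t = (Coalgebra.counit (R := k) h) • t) :
    (∀ (M : Type) [AddCommGroup M] [Module Bᵐᵒᵖ M] [Module k M] [IsScalarTower k Bᵐᵒᵖ M]
        (N : Submodule Bᵐᵒᵖ M),
        IsTTorsion k H A B ψ t M → IsTTorsion k H A B ψ t N) ∧
    (∀ (M : Type) [AddCommGroup M] [Module Bᵐᵒᵖ M] [Module k M] [IsScalarTower k Bᵐᵒᵖ M]
        (N : Submodule Bᵐᵒᵖ M),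
        IsTTorsion k H A B ψ t M → IsTTorsion k H A B ψ t (M ⧸ N)) ∧
    (∀ (M : Type) [AddCommGroup M] [Module Bᵐᵒᵖ M] [Module k M] [IsScalarTower k Bᵐᵒᵖ M]
        (N : Submodule Bᵐᵒᵖ M),
        IsTTorsion k H A B ψ t N → IsTTorsion k H A B ψ t (M ⧸ N) →
          IsTTorsion k H A B ψ t M) ∧
    (∀ (ι : Type) [DecidableEq ι] (Mi : ι → Type) [∀ i, AddCommGroup (Mi i)]
        [∀ i, Module Bᵐᵒᵖ (Mi i)] [∀ i, Module k (Mi i)]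
        [∀ i, IsScalarTower k Bᵐᵒᵖ (Mi i)],
        (∀ i, IsTTorsion k H A B ψ t (Mi i)) →
          IsTTorsion k H A B ψ t (DirectSum ι (fun i => Mi i))) := by
  exact tTorsion_localizing_general k H A B ψ ⟨hψone, hψmul⟩ t htcounit htint
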